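/- Let n and ℓ be integers with n/2 < ℓ ≤ ⌈(2n−2)/3⌉. Every zero-free sequence of length ℓ in Z/nZ contains a term of multiplicity at least ⌈(3ℓ − n + 1)/3⌉ (equivalently, at least (3ℓ−n+1)/3 rounded up). -/

import Mathlib

/-- A list in an additive commutative group is zero-free if no nonempty
sublist sums to zero. -/
def ZeroFree {G : Type*} [AddCommGroup G] (l : List G) : Prop :=
  ∀ t : List G, t.Sublist l → t ≠ [] → t.sum ≠ 0

/-- The sumset of a list: all sums of nonempty sublists. -/
def sumset {G : Type*} [AddCommGroup G] (l : List G) : Set G :=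
  {x | ∃ t : List G, t.Sublist l ∧ t ≠ [] ∧ t.sum = x}

/-!
Let `X` be the set of all subset sums of a zero-free sequence `s`, the empty sum included, and
suppose `|X| < 2|s|`. Deleting a term of `s` makes `X` smaller. If every deletion shrinks `X` by
exactly one, then `b + (X \ {σ}) = X \ {0}` for every term `b`, where `σ` is the sum of `s`, and
this forces all terms to be equal. Otherwise some term `b` can be deleted so that the hypothesis
is inherited by the rest; as `|X|` is less than twice the number of subset sums of the rest, these
overlap with their translate by `b`, which makes `b` a difference of two of them. By induction, `s`
consists of multiples `kᵢ • g` of a single element, where the subset sums of the positive integers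
`kᵢ` fill the whole interval `[0, ∑ kᵢ]`. Zero-freeness then gives `|X| = ∑ kᵢ + 1`, and since the
average of the `kᵢ` is less than `2`, many of them are equal to `1` or to `2`.
-/

open Finset
open scoped Pointwise

section SubsetSums

variable {M N : Type*} [AddCommMonoid M] [DecidableEq M] [AddCommMonoid N] [DecidableEq N]

/-- The set of sums of all sub-multisets of `s`. Unlike in `sumset`, the empty sum `0` is included;
unlike in `Finset.subsetSum`, terms may be repeated. -/
def subsetSums (s : Multiset M) : Finset M := (s.powerset.map Multiset.sum).toFinset

theorem mem_subsetSums {s : Multiset M} {x : M} : x ∈ subsetSums s ↔ ∃ t ≤ s, t.sum = x := by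
  simp [subsetSums]

theorem zero_mem_subsetSums (s : Multiset M) : 0 ∈ subsetSums s :=
  mem_subsetSums.2 ⟨0, zero_le, Multiset.sum_zero⟩

theorem sum_mem_subsetSums (s : Multiset M) : s.sum ∈ subsetSums s :=
  mem_subsetSums.2 ⟨s, le_rfl, rfl⟩

theorem subsetSums_cons (b : M) (s : Multiset M) :
    subsetSums (b ::ₘ s) = subsetSums s ∪ (b +ᵥ subsetSums s) := by
  ext x
  simp [subsetSums, mem_vadd_finset]

theorem subsetSums_map (f : M →+ N) (s : Multiset M) :
    subsetSums (s.map f) = (subsetSums s).image f := by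
  induction s using Multiset.induction_on with
  | empty => simp [subsetSums]
  | cons b s ih =>
    ext x
    simp [subsetSums_cons, ih, image_union, mem_vadd_finset]

end SubsetSums

/-- Smooth multisets of positive integers: those whose subset sums are all the integers from `0` to
their sum. They are the coefficients `kᵢ` of the sequences `kᵢ • g` to which zero-free sequences
with few subset sums reduce. -/
structure IsSmooth (m : Multiset ℕ) : Prop where
  zero_notMem : 0 ∉ m
  subsetSums_eq : subsetSums m = range (m.sum + 1)

namespace IsSmooth

variable {m : Multiset ℕ}

theorem cons (hm : IsSmooth m) {k : ℕ} (hk : 0 < k) (hk' : k ≤ m.sum + 1) :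
    IsSmooth (k ::ₘ m) where
  zero_notMem := by simp [hk.ne, hm.zero_notMem]
  subsetSums_eq := by
    ext j
    simp only [subsetSums_cons, hm.subsetSums_eq, Multiset.sum_cons, mem_union, mem_vadd_finset,
      mem_range, vadd_eq_add]
    constructor
    · rintro (hj | ⟨i, hi, rfl⟩) <;> omega
    · intro hj
      by_cases hjm : j < m.sum + 1
      · exact .inl hjm
      · exact .inr ⟨j - k, by omega, by omega⟩

theorem replicate_one (n : ℕ) : IsSmooth (Multiset.replicate n 1) := by
  induction n with
  | zero => exact ⟨by simp, by simp [subsetSums]⟩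
  | succ n ih => exact ih.cons one_pos (by omega)

theorem subsetSums_map_nsmul {M : Type*} [AddCommMonoid M] [DecidableEq M] (hm : IsSmooth m)
    (g : M) : subsetSums (m.map (· • g)) = (range (m.sum + 1)).image (· • g) := by
  rw [← hm.subsetSums_eq]
  exact subsetSums_map (multiplesHom M g) m

end IsSmooth

/-- The multiset version of `ZeroFree`: no nonempty sub-multiset sums to zero. Multisets make the
terms of the sequence interchangeable. -/
def ZeroSumFree {M : Type*} [AddCommMonoid M] (s : Multiset M) : Prop :=
  ∀ t ≤ s, t ≠ 0 → t.sum ≠ 0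

namespace ZeroSumFree

variable {M : Type*} [AddCommMonoid M]

theorem of_cons {b : M} {s : Multiset M} (h : ZeroSumFree (b ::ₘ s)) : ZeroSumFree s :=
  fun t ht => h t (ht.trans (Multiset.le_cons_self s b))

theorem add_ne_zero [DecidableEq M] {b x : M} {s : Multiset M} (h : ZeroSumFree (b ::ₘ s))
    (hx : x ∈ subsetSums s) : b + x ≠ 0 := by
  obtain ⟨t, ht, rfl⟩ := mem_subsetSums.1 hx
  simpa using h (b ::ₘ t) ((Multiset.cons_le_cons_iff b).2 ht) Multiset.cons_ne_zero

theorem nsmul_ne_zero {g : M} {m : Multiset ℕ} (hm : IsSmooth m)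
    (h : ZeroSumFree (m.map (· • g))) {j : ℕ} (hj : j ≠ 0) (hjm : j ≤ m.sum) : j • g ≠ 0 := by
  obtain ⟨t, ht, rfl⟩ : ∃ t ≤ m, t.sum = j := by
    rw [← mem_subsetSums, hm.subsetSums_eq, mem_range]
    omega
  have ht0 : t ≠ 0 := by
    rintro rfl
    exact hj Multiset.sum_zero
  rw [Multiset.sum_smul]
  exact h _ (Multiset.map_le_map ht) (by simpa using ht0)

end ZeroSumFree

section Group

variable {G : Type*} [AddCommGroup G] [DecidableEq G] {b : G} {s : Multiset G}

theorem sum_sub_mem_subsetSums {x : G} (hx : x ∈ subsetSums s) : s.sum - x ∈ subsetSums s := by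
  obtain ⟨t, ht, rfl⟩ := mem_subsetSums.1 hx
  obtain ⟨u, rfl⟩ := Multiset.le_iff_exists_add.1 ht
  exact mem_subsetSums.2 ⟨u, Multiset.le_add_left u t, by simp⟩

theorem eq_of_vadd_erase_eq {A : Finset G} {σ b c : G} (h0 : 0 ∈ A) (hσ : σ ≠ 0)
    (hb : b +ᵥ A.erase σ = A.erase 0) (hc : c +ᵥ A.erase σ = A.erase 0) : b = c := by
  by_contra hne
  have hbA : b ∈ c +ᵥ A.erase σ := by
    rw [hc, ← hb]
    exact mem_vadd_finset.2 ⟨0, mem_erase.2 ⟨hσ.symm, h0⟩, by simp⟩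
  obtain ⟨y, hy, hcy⟩ := mem_vadd_finset.1 hbA
  have hy0 : y ≠ 0 := by
    rintro rfl
    exact hne (by simpa using hcy.symm)
  have hyA : y ∈ b +ᵥ A.erase σ := hb ▸ mem_erase.2 ⟨hy0, mem_of_mem_erase hy⟩
  obtain ⟨z, hz, rfl⟩ := mem_vadd_finset.1 hyA
  have hcz : c + z ∈ A.erase 0 := hc ▸ vadd_mem_vadd_finset hz
  refine ne_of_mem_erase hcz (add_left_cancel (a := b) ?_)
  rw [add_zero, add_left_comm]
  exact hcy

namespace ZeroSumFree

theorem add_sum_notMem_subsetSums (h : ZeroSumFree (b ::ₘ s)) : b + s.sum ∉ subsetSums s :=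
  fun hmem => h.add_ne_zero (sum_sub_mem_subsetSums hmem) (by abel)

theorem subsetSums_subset_erase_sum (h : ZeroSumFree (b ::ₘ s)) :
    subsetSums s ⊆ (subsetSums (b ::ₘ s)).erase (b ::ₘ s).sum := by
  rw [subset_erase, Multiset.sum_cons, subsetSums_cons]
  exact ⟨subset_union_left, h.add_sum_notMem_subsetSums⟩

theorem vadd_subsetSums_subset_erase_zero (h : ZeroSumFree (b ::ₘ s)) :
    b +ᵥ subsetSums s ⊆ (subsetSums (b ::ₘ s)).erase 0 := by
  rw [subset_erase, subsetSums_cons]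
  refine ⟨subset_union_right, fun hmem => ?_⟩
  obtain ⟨x, hx, hbx⟩ := mem_vadd_finset.1 hmem
  exact h.add_ne_zero hx hbx

theorem card_subsetSums_lt_cons (h : ZeroSumFree (b ::ₘ s)) :
    #(subsetSums s) < #(subsetSums (b ::ₘ s)) :=
  (card_le_card h.subsetSums_subset_erase_sum).trans_lt
    (card_erase_lt_of_mem (sum_mem_subsetSums _))

theorem card_lt_card_subsetSums (h : ZeroSumFree s) : s.card < #(subsetSums s) := by
  induction s using Multiset.induction_on with
  | empty => exact card_pos.2 ⟨0, zero_mem_subsetSums 0⟩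
  | cons b s ih =>
    rw [Multiset.card_cons]
    exact (Nat.succ_le_of_lt (ih h.of_cons)).trans_lt h.card_subsetSums_lt_cons

theorem vadd_erase_sum_eq_erase_zero (h : ZeroSumFree (b ::ₘ s))
    (hcard : #(subsetSums (b ::ₘ s)) ≤ #(subsetSums s) + 1) :
    b +ᵥ (subsetSums (b ::ₘ s)).erase (b ::ₘ s).sum = (subsetSums (b ::ₘ s)).erase 0 := by
  have herase : subsetSums s = (subsetSums (b ::ₘ s)).erase (b ::ₘ s).sum := by
    refine eq_of_subset_of_card_le h.subsetSums_subset_erase_sum ?_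
    rw [card_erase_of_mem (sum_mem_subsetSums _)]
    omega
  rw [← herase]
  refine eq_of_subset_of_card_le h.vadd_subsetSums_subset_erase_zero ?_
  rw [card_erase_of_mem (zero_mem_subsetSums _), card_vadd_finset]
  omega

theorem eq_of_card_subsetSums_le_erase (h : ZeroSumFree s)
    (hcard : ∀ b ∈ s, #(subsetSums s) ≤ #(subsetSums (s.erase b)) + 1) {b c : G}
    (hb : b ∈ s) (hc : c ∈ s) : b = c := by
  have hvadd (a : G) (ha : a ∈ s) :
      a +ᵥ (subsetSums s).erase s.sum = (subsetSums s).erase 0 := by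
    have hcard_a := hcard a ha
    obtain ⟨t, rfl⟩ := Multiset.exists_cons_of_mem ha
    rw [Multiset.erase_cons_head] at hcard_a
    exact h.vadd_erase_sum_eq_erase_zero hcard_a
  have hsum : s.sum ≠ 0 := h s le_rfl (fun hs0 => by simp [hs0] at hb)
  exact eq_of_vadd_erase_eq (zero_mem_subsetSums s) hsum (hvadd b hb) (hvadd c hc)

theorem exists_isSmooth_cons {g : G} {m : Multiset ℕ} (hm : IsSmooth m)
    (h : ZeroSumFree (b ::ₘ m.map (· • g)))
    (hcard : #(subsetSums (b ::ₘ m.map (· • g))) < 2 * #(subsetSums (m.map (· • g)))) :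
    ∃ k, IsSmooth (k ::ₘ m) ∧ k • g = b := by
  have hoverlap : ¬ Disjoint (subsetSums (m.map (· • g))) (b +ᵥ subsetSums (m.map (· • g))) := by
    intro hdisj
    rw [subsetSums_cons, card_union_of_disjoint hdisj, card_vadd_finset] at hcard
    omega
  have hnsmul (x : G) : x ∈ subsetSums (m.map (· • g)) ↔ ∃ j < m.sum + 1, j • g = x := by
    simp [hm.subsetSums_map_nsmul]
  obtain ⟨_, hx, hbx⟩ := not_disjoint_iff.1 hoverlap
  obtain ⟨_, hz, hbz⟩ := mem_vadd_finset.1 hbx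
  obtain ⟨j, hj, rfl⟩ := (hnsmul _).1 hx
  obtain ⟨i, hi, rfl⟩ := (hnsmul _).1 hz
  rw [vadd_eq_add, ← eq_sub_iff_add_eq] at hbz
  have hij : i < j := by
    by_contra! hji
    refine h.add_ne_zero ((hnsmul _).2 ⟨i - j, by omega, rfl⟩) ?_
    rw [hbz, sub_nsmul g hji]
    abel
  exact ⟨j - i, hm.cons (by omega) (by omega), by rw [hbz, sub_nsmul g hij.le, sub_eq_add_neg]⟩

theorem exists_isSmooth_map_nsmul_eq (h : ZeroSumFree s)
    (hcard : #(subsetSums s) < 2 * s.card) :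
    ∃ (g : G) (m : Multiset ℕ), IsSmooth m ∧ m.map (· • g) = s := by
  induction s using Multiset.strongInductionOn with
  | _ s ih =>
    by_cases hsmall : ∀ b ∈ s, #(subsetSums s) ≤ #(subsetSums (s.erase b)) + 1
    · obtain ⟨g, hg⟩ := Multiset.card_pos_iff_exists_mem.1 (by omega : 0 < s.card)
      have hs : s = Multiset.replicate s.card g :=
        Multiset.eq_replicate_card.2 fun b hb => h.eq_of_card_subsetSums_le_erase hsmall hb hg
      exact ⟨g, _, .replicate_one s.card, by simpa using hs.symm⟩
    · push Not at hsmall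
      obtain ⟨b, hb, hlarge⟩ := hsmall
      obtain ⟨t, rfl⟩ := Multiset.exists_cons_of_mem hb
      rw [Multiset.erase_cons_head] at hlarge
      rw [Multiset.card_cons] at hcard
      obtain ⟨g, m, hm, rfl⟩ := ih t (Multiset.lt_cons_self t b) h.of_cons (by omega)
      have hlower := h.of_cons.card_lt_card_subsetSums
      obtain ⟨k, hkm, rfl⟩ := h.exists_isSmooth_cons hm (by omega)
      exact ⟨g, k ::ₘ m, hkm, Multiset.map_cons _ _ _⟩

theorem card_subsetSums_map_nsmul {g : G} {m : Multiset ℕ} (hm : IsSmooth m)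
    (h : ZeroSumFree (m.map (· • g))) : #(subsetSums (m.map (· • g))) = m.sum + 1 := by
  rw [hm.subsetSums_map_nsmul, card_image_of_injOn, card_range]
  have hlt_ne {i j : ℕ} (hij : i < j) (hj : j ≤ m.sum) : i • g ≠ j • g := fun heq =>
    h.nsmul_ne_zero hm (Nat.sub_ne_zero_of_lt hij) (by omega)
      (by rw [sub_nsmul g hij.le, heq, add_neg_cancel])
  intro i hi j hj heq
  rw [mem_coe, mem_range_succ_iff] at hi hj
  by_contra hne
  rcases lt_or_gt_of_ne hne with hij | hji
  · exact hlt_ne hij hj heq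
  · exact hlt_ne hji hi heq.symm

end ZeroSumFree

end Group

theorem three_mul_card_le_sum_add_count_one_add_count_two {m : Multiset ℕ} (hm : 0 ∉ m) :
    3 * m.card ≤ m.sum + 2 * m.count 1 + m.count 2 := by
  induction m using Multiset.induction_on with
  | empty => simp
  | cons k m ih =>
    rw [Multiset.mem_cons, not_or] at hm
    have ihm := ih hm.2
    simp only [Multiset.card_cons, Multiset.sum_cons, Multiset.count_cons]
    split_ifs <;> omega

theorem exists_mem_three_mul_card_le_sum_add_count {m : Multiset ℕ} (hm : 0 ∉ m)
    (hsum : m.sum < 3 * m.card) : ∃ k ∈ m, 3 * m.card ≤ m.sum + 3 * m.count k := by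
  have hcount := three_mul_card_le_sum_add_count_one_add_count_two hm
  rcases le_total (m.count 1) (m.count 2) with hle | hle
  · exact ⟨2, Multiset.count_pos.1 (by omega), by omega⟩
  · exact ⟨1, Multiset.count_pos.1 (by omega), by omega⟩

theorem count_le_count_map {M N : Type*} [DecidableEq M] [DecidableEq N] (f : M → N)
    (s : Multiset M) (a : M) : s.count a ≤ (s.map f).count (f a) := by
  rw [Multiset.le_count_iff_replicate_le, ← Multiset.map_replicate]
  exact Multiset.map_le_map (Multiset.le_count_iff_replicate_le.1 le_rfl)

theorem exists_sublist_coe_eq_of_le {M : Type*} {α : List M} {t : Multiset M} (ht : t ≤ α) :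
    ∃ l : List M, l.Sublist α ∧ (l : Multiset M) = t := by
  induction t using Quotient.inductionOn with
  | _ l =>
    obtain ⟨l', hperm, hsub⟩ := Multiset.coe_le.1 ht
    exact ⟨l', hsub, Multiset.coe_eq_coe.2 hperm⟩

section List

variable {G : Type*} [AddCommGroup G] {α : List G}

namespace ZeroFree

theorem zeroSumFree (h : ZeroFree α) : ZeroSumFree (α : Multiset G) := by
  intro t ht ht0
  obtain ⟨l, hsub, rfl⟩ := exists_sublist_coe_eq_of_le ht
  rw [Multiset.sum_coe]
  exact h l hsub (by simpa using ht0)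

theorem sumset_eq_erase_zero [DecidableEq G] (h : ZeroFree α) :
    sumset α = ((subsetSums (α : Multiset G)).erase 0 : Finset G) := by
  ext x
  rw [mem_coe, mem_erase, mem_subsetSums]
  constructor
  · rintro ⟨l, hsub, hne, rfl⟩
    exact ⟨h l hsub hne, l, hsub.subperm, Multiset.sum_coe l⟩
  · rintro ⟨hx, t, ht, rfl⟩
    obtain ⟨l, hsub, rfl⟩ := exists_sublist_coe_eq_of_le ht
    refine ⟨l, hsub, ?_, (Multiset.sum_coe l).symm⟩
    rintro rfl
    exact hx rfl

theorem card_subsetSums [DecidableEq G] (h : ZeroFree α) :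
    #(subsetSums (α : Multiset G)) = (sumset α).ncard + 1 := by
  rw [h.sumset_eq_erase_zero, Set.ncard_coe_finset, card_erase_add_one (zero_mem_subsetSums _)]

theorem ncard_sumset_lt_natCard [Finite G] (h : ZeroFree α) :
    (sumset α).ncard < Nat.card G := by
  refine Set.ncard_lt_card fun huniv => ?_
  obtain ⟨l, hsub, hne, hsum⟩ := huniv.ge (Set.mem_univ (0 : G))
  exact h l hsub hne hsum

end ZeroFree

end List

theorem stmt15_general {G : Type*} [AddCommGroup G] [DecidableEq G] {n : ℕ} {α : List G}
    (hzf : ZeroFree α) (hsumset : (sumset α).ncard < n) (hn : n < 2 * α.length) :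
    ∃ a ∈ α, (3 * α.length - n + 1 + 2) / 3 ≤ α.count a := by
  have hcard := hzf.card_subsetSums
  obtain ⟨g, m, hm, hα⟩ := hzf.zeroSumFree.exists_isSmooth_map_nsmul_eq
    (by rw [hcard, Multiset.coe_card]; omega)
  have hlength : m.card = α.length := by simpa using congrArg Multiset.card hα
  have hsum : m.sum + 1 = (sumset α).ncard + 1 := by
    rw [← hcard, ← hα, ZeroSumFree.card_subsetSums_map_nsmul hm (hα ▸ hzf.zeroSumFree)]
  obtain ⟨k, hk, hcount⟩ :=
    exists_mem_three_mul_card_le_sum_add_count hm.zero_notMem (by omega)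
  have hmult : m.count k ≤ α.count (k • g) := by
    simpa [hα] using count_le_count_map (· • g) m k
  have hmem : k • g ∈ (α : Multiset G) := hα ▸ Multiset.mem_map_of_mem (· • g) hk
  exact ⟨k • g, hmem, by omega⟩

theorem stmt15 (n ℓ : ℕ) (h1 : n < 2 * ℓ) (h2 : ℓ ≤ (2 * n - 2 + 2) / 3)
    (α : List (ZMod n)) (hlen : α.length = ℓ) (hzf : ZeroFree α) :
    ∃ a ∈ α, (3 * ℓ - n + 1 + 2) / 3 ≤ α.count a := by
  have : NeZero n := ⟨by omega⟩
  subst hlen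
  exact stmt15_general hzf (by simpa using hzf.ncard_sumset_lt_natCard) h1
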